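/- arXiv:2604.07148 — 2 statements merged into one kernel-verified Lean document; each statement's English description precedes it below -/
import Mathlib

section
/- Let π (old policy) and π' (new policy) be two policies in the finite discounted MDP setup, and assume π(s,a) > 0 for every state s and action a. Let Amax = max over all (s,a) of |Aπ(s,a)| and let B = (2·η·Amax/(1−η)²)·√(1/2). Then V(π') ≥ V(π) + (1/(1−η))·∑_s dπ(s)·∑_a π'(s,a)·Aπ(s,a) − B·max_s √(KL(π'(s,·) ‖ π(s,·))). -/
open scoped BigOperators

/-- Induced transition matrix of a policy. -/
noncomputable def Mmat {S A : Type*} [Fintype A] (P : S → A → S → ℝ) (π : S → A → ℝ) :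
    Matrix S S ℝ :=
  fun s s' => ∑ a, π s a * P s a s'

/-- Induced reward vector of a policy. -/
noncomputable def rvec {S A : Type*} [Fintype A] (r : S → A → ℝ) (π : S → A → ℝ) : S → ℝ :=
  fun s => ∑ a, π s a * r s a

/-- Value function: Vπ(s) = ∑_{t=0}^∞ η^t (Mπ^t rπ)(s). -/
noncomputable def Vval {S A : Type*} [Fintype S] [DecidableEq S] [Fintype A] (P : S → A → S → ℝ)
    (r : S → A → ℝ) (η : ℝ) (π : S → A → ℝ) : S → ℝ :=
  fun s => ∑' t : ℕ, η ^ t * ((Mmat P π ^ t).mulVec (rvec r π)) s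

/-- State-action value Qπ(s,a) = r(s,a) + η ∑_{s'} P(s,a,s') Vπ(s'). -/
noncomputable def Qval {S A : Type*} [Fintype S] [DecidableEq S] [Fintype A] (P : S → A → S → ℝ)
    (r : S → A → ℝ) (η : ℝ) (π : S → A → ℝ) : S → A → ℝ :=
  fun s a => r s a + η * ∑ s', P s a s' * Vval P r η π s'

/-- Advantage Aπ(s,a) = Qπ(s,a) − Vπ(s). -/
noncomputable def Adv {S A : Type*} [Fintype S] [DecidableEq S] [Fintype A] (P : S → A → S → ℝ)
    (r : S → A → ℝ) (η : ℝ) (π : S → A → ℝ) : S → A → ℝ :=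
  fun s a => Qval P r η π s a - Vval P r η π s

/-- Discounted state visitation distribution dπ(s) = (1−η) ∑_{t} η^t (μ Mπ^t)(s). -/
noncomputable def dvisit {S A : Type*} [Fintype S] [DecidableEq S] [Fintype A] (P : S → A → S → ℝ)
    (η : ℝ) (π : S → A → ℝ) (μ : S → ℝ) : S → ℝ :=
  fun s => (1 - η) * ∑' t : ℕ, η ^ t * (Matrix.vecMul μ (Mmat P π ^ t)) s

/-- Total variation distance between probability vectors on a finite type. -/
noncomputable def TV {α : Type*} [Fintype α] (p q : α → ℝ) : ℝ :=
  (1 / 2) * ∑ a, |p a - q a|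

/-- KL divergence (for q everywhere positive; terms with p a = 0 contribute 0). -/
noncomputable def KL {α : Type*} [Fintype α] (p q : α → ℝ) : ℝ :=
  ∑ a, p a * Real.log (p a / q a)

/-! The error made by replacing `V(π')` with its surrogate is `μ (N' - N) g`, where
`N = ∑ₜ (η Mπ)ᵗ`, `N' = ∑ₜ (η Mπ')ᵗ` and `g` is the advantage of `π` averaged over `π'`: the
performance difference lemma of Kakade and Langford gives `V' - V = N' g`, while the surrogate gain
is `μ N g`. In the `ℓ^∞` operator norm, the resolvent identity `N' - N = N' (η Mπ' - η Mπ) N` bounds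
this error by `2 η δ ‖g‖ / (1 - η)²`, where `δ` is the largest total variation distance between the
two policies, and Pinsker's inequality bounds `δ`. -/

section Pinsker

theorem hasDerivAt_log_sub_rational {x : ℝ} (hx : 0 < x) :
    HasDerivAt (fun y => Real.log y - (y - 1) * (5 * y + 1) / (2 * y * (y + 2)))
      ((x - 1) ^ 3 / (x ^ 2 * (x + 2) ^ 2)) x := by
  have hnum : HasDerivAt (fun y : ℝ => (y - 1) * (5 * y + 1))
      (1 * (5 * x + 1) + (x - 1) * (5 * 1)) x :=
    ((hasDerivAt_id x).sub_const 1).mul (((hasDerivAt_id x).const_mul 5).add_const 1)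
  have hden : HasDerivAt (fun y : ℝ => 2 * y * (y + 2)) (2 * 1 * (x + 2) + 2 * x * 1) x :=
    ((hasDerivAt_id x).const_mul 2).mul ((hasDerivAt_id x).add_const 2)
  refine ((Real.hasDerivAt_log hx.ne').sub (hnum.div hden (by positivity))).congr_deriv ?_
  field_simp
  ring

-- At `x = p / q`, this rational minorant of `log` turns `p log (p / q) - p + q` into exactly
-- `(p - q)² / ((2 p + 4 q) / 3)`; Pinsker's inequality is then Cauchy-Schwarz, since the weights
-- `(2 p + 4 q) / 3` sum to `2`.
theorem rational_le_log {x : ℝ} (hx : 0 < x) :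
    (x - 1) * (5 * x + 1) / (2 * x * (x + 2)) ≤ Real.log x := by
  have hmin : IsMinOn (fun y => Real.log y - (y - 1) * (5 * y + 1) / (2 * y * (y + 2)))
      (Set.Ioi 0) 1 := by
    refine isMinOn_Ioi_of_deriv (hasDerivAt_log_sub_rational one_pos).continuousAt
      (fun y hy => (hasDerivAt_log_sub_rational hy.1).differentiableAt.differentiableWithinAt)
      (fun y hy => (hasDerivAt_log_sub_rational
        (one_pos.trans hy)).differentiableAt.differentiableWithinAt)
      (fun y hy => ?_) (fun y hy => ?_)
    · rw [(hasDerivAt_log_sub_rational hy.1).deriv]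
      have hcube : (y - 1) ^ 3 ≤ 0 := Odd.pow_nonpos (by decide) (sub_nonpos.2 hy.2.le)
      exact div_nonpos_of_nonpos_of_nonneg hcube (by positivity)
    · rw [(hasDerivAt_log_sub_rational (one_pos.trans hy)).deriv]
      have hcube : 0 ≤ (y - 1) ^ 3 := pow_nonneg (sub_nonneg.2 (le_of_lt hy)) 3
      positivity
  simpa using hmin hx

theorem sq_sub_le_mul_log_div {p q : ℝ} (hp : 0 ≤ p) (hq : 0 ≤ q) (hpq : q = 0 → p = 0) :
    (p - q) ^ 2 ≤ (2 * p + 4 * q) / 3 * (p * Real.log (p / q) - p + q) := by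
  rcases hp.eq_or_lt with rfl | hp
  · simp only [zero_sub, neg_sq, mul_zero, zero_add, zero_mul]
    nlinarith [sq_nonneg q]
  · have hq : 0 < q := hq.lt_of_ne fun h => hp.ne' (hpq h.symm)
    calc (p - q) ^ 2
        = (2 * p + 4 * q) / 3 *
            (p * ((p / q - 1) * (5 * (p / q) + 1) / (2 * (p / q) * (p / q + 2))) - p + q) := by
          field_simp
          ring
      _ ≤ (2 * p + 4 * q) / 3 * (p * Real.log (p / q) - p + q) := by
          gcongr
          exact rational_le_log (div_pos hp hq)

theorem sub_le_mul_log_div {p q : ℝ} (hp : 0 ≤ p) (hq : 0 ≤ q) (hpq : q = 0 → p = 0) :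
    p - q ≤ p * Real.log (p / q) := by
  rcases hp.eq_or_lt with rfl | hp
  · simpa using hq
  · have hq : 0 < q := hq.lt_of_ne fun h => hp.ne' (hpq h.symm)
    calc p - q = p * (1 - (p / q)⁻¹) := by field_simp
      _ ≤ p * Real.log (p / q) := by
          gcongr
          exact Real.one_sub_inv_le_log_of_pos (div_pos hp hq)

theorem TV_le_sqrt_KL_div_two {α : Type*} [Fintype α] {p q : α → ℝ} (hp : p ∈ stdSimplex ℝ α)
    (hq : q ∈ stdSimplex ℝ α) (hpq : ∀ a, q a = 0 → p a = 0) : TV p q ≤ √(KL p q / 2) := by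
  have hterm : ∀ a, |p a - q a| ^ 2 ≤
      (2 * p a + 4 * q a) / 3 * (p a * Real.log (p a / q a) - p a + q a) := fun a => by
    rw [sq_abs]
    exact sq_sub_le_mul_log_div (hp.1 a) (hq.1 a) (hpq a)
  have hweight : ∀ a, 0 ≤ (2 * p a + 4 * q a) / 3 := fun a => by
    linarith [hp.1 a, hq.1 a]
  have hweight_sum : ∑ a, (2 * p a + 4 * q a) / 3 = 2 := by
    rw [← Finset.sum_div, Finset.sum_add_distrib, ← Finset.mul_sum, ← Finset.mul_sum, hp.2, hq.2]
    norm_num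
  have hKL : ∑ a, (p a * Real.log (p a / q a) - p a + q a) = KL p q := by
    rw [Finset.sum_add_distrib, Finset.sum_sub_distrib, hp.2, hq.2, sub_add_cancel, KL]
  have hdiv : ∀ a, 0 ≤ p a * Real.log (p a / q a) - p a + q a := fun a => by
    linarith [sub_le_mul_log_div (hp.1 a) (hq.1 a) (hpq a)]
  have hcauchy : (∑ a, |p a - q a|) ^ 2 ≤ 2 * KL p q := by
    rw [← hweight_sum, ← hKL]
    exact Finset.sum_sq_le_sum_mul_sum_of_sq_le_mul _ (fun a _ => hweight a) (fun a _ => hdiv a)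
      fun a _ => hterm a
  refine Real.le_sqrt_of_sq_le ?_
  rw [TV, mul_pow]
  linarith

end Pinsker

section Averaging

variable {ι : Type*} [Fintype ι]

theorem sum_abs_of_mem_stdSimplex {p : ι → ℝ} (hp : p ∈ stdSimplex ℝ ι) : ∑ i, |p i| = 1 := by
  simp only [abs_of_nonneg (hp.1 _), hp.2]

theorem abs_dotProduct_le_norm {p : ι → ℝ} (hp : p ∈ stdSimplex ℝ ι) (v : ι → ℝ) :
    |p ⬝ᵥ v| ≤ ‖v‖ :=
  calc |p ⬝ᵥ v| ≤ ∑ i, |p i * v i| := Finset.abs_sum_le_sum_abs _ _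
    _ ≤ ∑ i, |p i| * ‖v‖ := by
        gcongr with i
        rw [abs_mul]
        gcongr
        exact norm_le_pi_norm v i
    _ = ‖v‖ := by rw [← Finset.sum_mul, sum_abs_of_mem_stdSimplex hp, one_mul]

end Averaging

section NeumannSeries

variable {R : Type*} [NormedRing R] {x y : R} {c : ℝ}

theorem norm_tsum_geometric_le [NormOneClass R] (hc : c < 1) (hx : ‖x‖ ≤ c) :
    ‖∑' n : ℕ, x ^ n‖ ≤ (1 - c)⁻¹ := by
  refine (tsum_geometric_le_of_norm_lt_one x (hx.trans_lt hc)).trans ?_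
  rw [norm_one, sub_self, zero_add]
  gcongr

variable [HasSummableGeomSeries R]

theorem tsum_geometric_sub_tsum_geometric (hx : ‖x‖ < 1) (hy : ‖y‖ < 1) :
    ∑' n : ℕ, x ^ n - ∑' n : ℕ, y ^ n = (∑' n : ℕ, x ^ n) * (x - y) * ∑' n : ℕ, y ^ n := by
  have hxy : x - y = (1 - y) - (1 - x) := by abel
  rw [hxy, mul_sub, sub_mul, mul_assoc, mul_neg_geom_series y hy, geom_series_mul_neg x hx, mul_one,
    one_mul]

theorem norm_tsum_geometric_sub_tsum_geometric_le [NormOneClass R] (hc : c < 1) (hx : ‖x‖ ≤ c)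
    (hy : ‖y‖ ≤ c) :
    ‖∑' n : ℕ, x ^ n - ∑' n : ℕ, y ^ n‖ ≤ ‖x - y‖ / (1 - c) ^ 2 := by
  rw [tsum_geometric_sub_tsum_geometric (hx.trans_lt hc) (hy.trans_lt hc)]
  have : 0 ≤ (1 - c)⁻¹ := inv_nonneg.2 (sub_nonneg.2 hc.le)
  calc ‖(∑' n : ℕ, x ^ n) * (x - y) * ∑' n : ℕ, y ^ n‖
      ≤ ‖∑' n : ℕ, x ^ n‖ * ‖x - y‖ * ‖∑' n : ℕ, y ^ n‖ := norm_mul₃_le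
    _ ≤ (1 - c)⁻¹ * ‖x - y‖ * (1 - c)⁻¹ := by
        gcongr
        · exact norm_tsum_geometric_le hc hx
        · exact norm_tsum_geometric_le hc hy
    _ = ‖x - y‖ / (1 - c) ^ 2 := by
        rw [div_eq_mul_inv, ← inv_pow]
        ring

end NeumannSeries

section Policy

open Matrix
open scoped Matrix.Norms.Operator

variable {S A : Type*} [Fintype S] [Fintype A] {P : S → A → S → ℝ} {π π' : S → A → ℝ} {η : ℝ}

theorem Mmat_mulVec_apply (v : S → ℝ) (s : S) : (Mmat P π *ᵥ v) s = ∑ a, π s a * (P s a ⬝ᵥ v) := by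
  simp only [mulVec, dotProduct, Mmat, Finset.sum_mul, Finset.mul_sum, mul_assoc]
  exact Finset.sum_comm

theorem norm_Mmat_le (hP : ∀ s a, P s a ∈ stdSimplex ℝ S) {w : S → A → ℝ} {c : ℝ} (hc : 0 ≤ c)
    (hw : ∀ s, ∑ a, |w s a| ≤ c) : ‖Mmat P w‖ ≤ c := by
  lift c to NNReal using hc
  rw [← coe_nnnorm, NNReal.coe_le_coe, linfty_opNNNorm_def, Finset.sup_le_iff]
  refine fun s _ => NNReal.coe_le_coe.1 ?_
  push_cast
  calc ∑ s', ‖∑ a, w s a * P s a s'‖ ≤ ∑ s', ∑ a, |w s a| * |P s a s'| := by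
        gcongr with s'
        simpa only [Real.norm_eq_abs, abs_mul] using
          Finset.abs_sum_le_sum_abs (fun a => w s a * P s a s') _
    _ = ∑ a, |w s a| := by
        rw [Finset.sum_comm]
        simp only [← Finset.mul_sum, sum_abs_of_mem_stdSimplex (hP s _), mul_one]
    _ ≤ c := hw s

theorem norm_smul_Mmat_le (hP : ∀ s a, P s a ∈ stdSimplex ℝ S) (hη : 0 ≤ η)
    (hπ : ∀ s, π s ∈ stdSimplex ℝ A) : ‖η • Mmat P π‖ ≤ η := by
  rw [norm_smul, Real.norm_of_nonneg hη]
  exact mul_le_of_le_one_right hη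
    (norm_Mmat_le hP zero_le_one fun s => (sum_abs_of_mem_stdSimplex (hπ s)).le)

theorem norm_Mmat_sub_Mmat_le (hP : ∀ s a, P s a ∈ stdSimplex ℝ S) {δ : ℝ} (hδ : 0 ≤ δ)
    (hTV : ∀ s, TV (π' s) (π s) ≤ δ) : ‖Mmat P π' - Mmat P π‖ ≤ 2 * δ := by
  have hsub : Mmat P π' - Mmat P π = Mmat P (π' - π) := by
    ext s s'
    simp only [Matrix.sub_apply, Mmat, Pi.sub_apply, sub_mul, Finset.sum_sub_distrib]
  rw [hsub]
  refine norm_Mmat_le hP (by positivity) fun s => ?_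
  have := hTV s
  rw [TV] at this
  simp only [Pi.sub_apply]
  linarith

variable [DecidableEq S] {r : S → A → ℝ}

/-- The successor matrix `∑ₜ (η Mπ)ᵗ = (1 - η Mπ)⁻¹` of a policy, for `0 ≤ η < 1`: its `(s, s')`
entry is the expected discounted number of visits to `s'` when starting from `s`. -/
noncomputable def successorMatrix (P : S → A → S → ℝ) (η : ℝ) (π : S → A → ℝ) : Matrix S S ℝ :=
  ∑' t : ℕ, (η • Mmat P π) ^ t

/-- The advantage of `π` averaged over the actions of another policy `π'`. -/
noncomputable def meanAdv (P : S → A → S → ℝ) (r : S → A → ℝ) (η : ℝ) (π π' : S → A → ℝ) :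
    S → ℝ :=
  fun s => π' s ⬝ᵥ Adv P r η π s

theorem norm_successorMatrix_sub_le [Nonempty S] (hP : ∀ s a, P s a ∈ stdSimplex ℝ S)
    (hη0 : 0 ≤ η) (hη1 : η < 1) (hπ : ∀ s, π s ∈ stdSimplex ℝ A)
    (hπ' : ∀ s, π' s ∈ stdSimplex ℝ A) {δ : ℝ} (hδ : 0 ≤ δ) (hTV : ∀ s, TV (π' s) (π s) ≤ δ) :
    ‖successorMatrix P η π' - successorMatrix P η π‖ ≤ 2 * η * δ / (1 - η) ^ 2 := by
  refine (norm_tsum_geometric_sub_tsum_geometric_le hη1 (norm_smul_Mmat_le hP hη0 hπ')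
    (norm_smul_Mmat_le hP hη0 hπ)).trans ?_
  rw [← smul_sub, norm_smul, Real.norm_of_nonneg hη0, mul_comm 2 η, mul_assoc]
  gcongr
  exact norm_Mmat_sub_Mmat_le hP hδ hTV

theorem tsum_eq_map_successorMatrix (hP : ∀ s a, P s a ∈ stdSimplex ℝ S) (hη0 : 0 ≤ η)
    (hη1 : η < 1) (hπ : ∀ s, π s ∈ stdSimplex ℝ A) (φ : Matrix S S ℝ →ₗ[ℝ] ℝ) :
    ∑' t : ℕ, η ^ t * φ (Mmat P π ^ t) = φ (successorMatrix P η π) := by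
  have hsum : Summable fun t : ℕ => (η • Mmat P π) ^ t :=
    summable_geometric_of_norm_lt_one ((norm_smul_Mmat_le hP hη0 hπ).trans_lt hη1)
  refine HasSum.tsum_eq ?_
  simpa only [successorMatrix, smul_pow, LinearMap.coe_toContinuousLinearMap', map_smul,
    smul_eq_mul] using hsum.hasSum.mapL φ.toContinuousLinearMap

theorem Vval_eq_successorMatrix_mulVec (hP : ∀ s a, P s a ∈ stdSimplex ℝ S) (hη0 : 0 ≤ η)
    (hη1 : η < 1) (hπ : ∀ s, π s ∈ stdSimplex ℝ A) :
    Vval P r η π = successorMatrix P η π *ᵥ rvec r π :=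
  funext fun s => tsum_eq_map_successorMatrix hP hη0 hη1 hπ
    ((LinearMap.proj s : (S → ℝ) →ₗ[ℝ] ℝ) ∘ₗ (mulVecBilin ℝ ℝ).flip (rvec r π))

theorem dvisit_eq_vecMul_successorMatrix (hP : ∀ s a, P s a ∈ stdSimplex ℝ S) (hη0 : 0 ≤ η)
    (hη1 : η < 1) (hπ : ∀ s, π s ∈ stdSimplex ℝ A) (μ : S → ℝ) :
    dvisit P η π μ = (1 - η) • (μ ᵥ* successorMatrix P η π) :=
  funext fun s => congrArg ((1 - η) * ·) (tsum_eq_map_successorMatrix hP hη0 hη1 hπ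
    (LinearMap.proj s ∘ₗ vecMulBilin ℝ ℝ μ))

theorem meanAdv_eq_rvec_sub_mulVec (hπ' : ∀ s, π' s ∈ stdSimplex ℝ A) :
    meanAdv P r η π π' = rvec r π' - (1 - η • Mmat P π') *ᵥ Vval P r η π := by
  funext s
  have hVval : ∑ a, π' s a * Vval P r η π s = Vval P r η π s := by
    rw [← Finset.sum_mul, (hπ' s).2, one_mul]
  simp only [meanAdv, dotProduct, Adv, Qval, mul_sub, mul_add, Finset.sum_sub_distrib,
    Finset.sum_add_distrib, hVval, rvec, Pi.sub_apply, sub_mulVec, one_mulVec, smul_mulVec,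
    Pi.smul_apply, smul_eq_mul, Mmat_mulVec_apply, Finset.mul_sum, mul_left_comm η]
  ring

theorem Vval_sub_Vval_eq_successorMatrix_mulVec (hP : ∀ s a, P s a ∈ stdSimplex ℝ S)
    (hη0 : 0 ≤ η) (hη1 : η < 1) (hπ' : ∀ s, π' s ∈ stdSimplex ℝ A) :
    Vval P r η π' - Vval P r η π = successorMatrix P η π' *ᵥ meanAdv P r η π π' := by
  have hinv : successorMatrix P η π' * (1 - η • Mmat P π') = 1 :=
    geom_series_mul_neg _ ((norm_smul_Mmat_le hP hη0 hπ').trans_lt hη1)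
  rw [meanAdv_eq_rvec_sub_mulVec hπ', mulVec_sub, mulVec_mulVec, hinv, one_mulVec,
    ← Vval_eq_successorMatrix_mulVec hP hη0 hη1 hπ']

theorem dvisit_dotProduct (hP : ∀ s a, P s a ∈ stdSimplex ℝ S) (hη0 : 0 ≤ η) (hη1 : η < 1)
    (hπ : ∀ s, π s ∈ stdSimplex ℝ A) (μ v : S → ℝ) :
    1 / (1 - η) * (dvisit P η π μ ⬝ᵥ v) = μ ⬝ᵥ (successorMatrix P η π *ᵥ v) := by
  have hη : 1 - η ≠ 0 := (sub_pos.2 hη1).ne'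
  rw [dvisit_eq_vecMul_successorMatrix hP hη0 hη1 hπ, smul_dotProduct, smul_eq_mul, ← mul_assoc,
    one_div_mul_cancel hη, one_mul, dotProduct_mulVec]

theorem norm_meanAdv_le (hπ' : ∀ s, π' s ∈ stdSimplex ℝ A) {C : ℝ} (hC : 0 ≤ C)
    (hAdv : ∀ s a, |Adv P r η π s a| ≤ C) : ‖meanAdv P r η π π'‖ ≤ C :=
  (pi_norm_le_iff_of_nonneg hC).2 fun s => (abs_dotProduct_le_norm (hπ' s) _).trans
    ((pi_norm_le_iff_of_nonneg hC).2 (hAdv s))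

theorem abs_value_sub_surrogate_le [Nonempty S] (hP : ∀ s a, P s a ∈ stdSimplex ℝ S) (hη0 : 0 ≤ η)
    (hη1 : η < 1) (hπ : ∀ s, π s ∈ stdSimplex ℝ A) (hπ' : ∀ s, π' s ∈ stdSimplex ℝ A)
    {μ : S → ℝ} (hμ : μ ∈ stdSimplex ℝ S) {C δ : ℝ} (hC : 0 ≤ C) (hδ : 0 ≤ δ)
    (hAdv : ∀ s a, |Adv P r η π s a| ≤ C) (hTV : ∀ s, TV (π' s) (π s) ≤ δ) :
    |μ ⬝ᵥ Vval P r η π' -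
        (μ ⬝ᵥ Vval P r η π + 1 / (1 - η) * (dvisit P η π μ ⬝ᵥ meanAdv P r η π π'))| ≤
      2 * η * C / (1 - η) ^ 2 * δ := by
  set g := meanAdv P r η π π'
  calc _ = |μ ⬝ᵥ ((successorMatrix P η π' - successorMatrix P η π) *ᵥ g)| := by
        rw [dvisit_dotProduct hP hη0 hη1 hπ, ← sub_sub, ← dotProduct_sub,
          Vval_sub_Vval_eq_successorMatrix_mulVec hP hη0 hη1 hπ', ← dotProduct_sub, ← sub_mulVec]
    _ ≤ ‖(successorMatrix P η π' - successorMatrix P η π) *ᵥ g‖ := abs_dotProduct_le_norm hμ _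
    _ ≤ ‖successorMatrix P η π' - successorMatrix P η π‖ * ‖g‖ := linfty_opNorm_mulVec _ _
    _ ≤ 2 * η * δ / (1 - η) ^ 2 * C := by
        gcongr
        · exact norm_successorMatrix_sub_le hP hη0 hη1 hπ hπ' hδ hTV
        · exact norm_meanAdv_le hπ' hC hAdv
    _ = 2 * η * C / (1 - η) ^ 2 * δ := by ring

end Policy

theorem performance_lower_bound_general
    {S A : Type*} [Fintype S] [DecidableEq S] [Fintype A] [Nonempty S] [Nonempty A]
    {P : S → A → S → ℝ} (hP : ∀ s a, P s a ∈ stdSimplex ℝ S) (r : S → A → ℝ)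
    {η : ℝ} (hη0 : 0 ≤ η) (hη1 : η < 1) {π π' : S → A → ℝ}
    (hπ : ∀ s, π s ∈ stdSimplex ℝ A) (hπ' : ∀ s, π' s ∈ stdSimplex ℝ A)
    (hac : ∀ s a, π s a = 0 → π' s a = 0) {μ : S → ℝ} (hμ : μ ∈ stdSimplex ℝ S) :
    |∑ s, μ s * Vval P r η π' s -
        (∑ s, μ s * Vval P r η π s
          + (1 / (1 - η)) * ∑ s, dvisit P η π μ s * ∑ a, π' s a * Adv P r η π s a)| ≤
      2 * η * Finset.univ.sup' Finset.univ_nonempty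
          (fun p : S × A => |Adv P r η π p.1 p.2|) / (1 - η) ^ 2 * √(1 / 2)
        * Finset.univ.sup' Finset.univ_nonempty (fun s => √(KL (π' s) (π s))) := by
  set Amax := Finset.univ.sup' Finset.univ_nonempty (fun p : S × A => |Adv P r η π p.1 p.2|)
  set κ := Finset.univ.sup' Finset.univ_nonempty (fun s => √(KL (π' s) (π s)))
  have hAdv (s : S) (a : A) : |Adv P r η π s a| ≤ Amax :=
    Finset.le_sup' (fun p : S × A => |Adv P r η π p.1 p.2|) (Finset.mem_univ (s, a))
  have hKL (s : S) : √(KL (π' s) (π s)) ≤ κ :=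
    Finset.le_sup' (fun s => √(KL (π' s) (π s))) (Finset.mem_univ s)
  have hAmax : 0 ≤ Amax :=
    (abs_nonneg _).trans (hAdv (Classical.arbitrary S) (Classical.arbitrary A))
  have hκ : 0 ≤ κ := (Real.sqrt_nonneg _).trans (hKL (Classical.arbitrary S))
  have hTV (s : S) : TV (π' s) (π s) ≤ √(1 / 2) * κ :=
    calc TV (π' s) (π s) ≤ √(KL (π' s) (π s) / 2) := TV_le_sqrt_KL_div_two (hπ' s) (hπ s) (hac s)
      _ = √(1 / 2) * √(KL (π' s) (π s)) := by
          rw [← Real.sqrt_mul (by norm_num), one_div_mul_eq_div]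
      _ ≤ √(1 / 2) * κ := by gcongr; exact hKL s
  rw [mul_assoc]
  exact abs_value_sub_surrogate_le hP hη0 hη1 hπ hπ' hμ hAmax (by positivity) hAdv hTV

/-- Performance lower bound for the updated policy (GRPO-style bound). -/
theorem performance_lower_bound
    {S A : Type*} [Fintype S] [DecidableEq S] [Fintype A] [Nonempty S] [Nonempty A]
    (P : S → A → S → ℝ) (hP0 : ∀ s a s', 0 ≤ P s a s') (hP1 : ∀ s a, ∑ s', P s a s' = 1)
    (r : S → A → ℝ) (Rmax : ℝ) (hRmax : 0 ≤ Rmax) (hr : ∀ s a, |r s a| ≤ Rmax)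
    (η : ℝ) (hη0 : 0 < η) (hη1 : η < 1)
    (π π' : S → A → ℝ)
    (hπ0 : ∀ s a, 0 ≤ π s a) (hπ1 : ∀ s, ∑ a, π s a = 1)
    (hπ'0 : ∀ s a, 0 ≤ π' s a) (hπ'1 : ∀ s, ∑ a, π' s a = 1)
    (hπpos : ∀ s a, 0 < π s a)
    (μ : S → ℝ) (hμ0 : ∀ s, 0 ≤ μ s) (hμ1 : ∑ s, μ s = 1)
    (Amax B : ℝ)
    (hAmax : Amax = Finset.univ.sup' Finset.univ_nonempty
      (fun p : S × A => |Adv P r η π p.1 p.2|))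
    (hB : B = (2 * η * Amax / (1 - η) ^ 2) * Real.sqrt (1 / 2)) :
    ∑ s, μ s * Vval P r η π' s ≥
      ∑ s, μ s * Vval P r η π s
        + (1 / (1 - η)) * ∑ s, dvisit P η π μ s * ∑ a, π' s a * Adv P r η π s a
        - B * Finset.univ.sup' Finset.univ_nonempty
            (fun s => Real.sqrt (KL (fun a => π' s a) (fun a => π s a))) := by
  have h := performance_lower_bound_general (fun s a => ⟨hP0 s a, hP1 s a⟩) r hη0.le hη1
    (fun s => ⟨hπ0 s, hπ1 s⟩) (fun s => ⟨hπ'0 s, hπ'1 s⟩)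
    (fun s a h => absurd h (hπpos s a).ne') ⟨hμ0, hμ1⟩
  rw [← hAmax, ← hB] at h
  linarith [(abs_le.1 h).1]
end

section
/- Visitation distribution shift bound: let S be a nonempty finite type, let M and M' be row-stochastic S × S matrices (entrywise nonnegative with every row summing to 1) such that TV(M(s,·), M'(s,·)) ≤ δ for every s, let μ be a probability vector on S, and let 0 < η < 1. Define the discounted visitation distributions d(s) = (1−η)·∑_{t=0}^∞ η^t (μ M^t)(s) and d'(s) = (1−η)·∑_{t=0}^∞ η^t (μ M'^t)(s). Then TV(d, d') ≤ η·δ/(1−η). -/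
open scoped BigOperators

/-!
Row vectors are measured in `ℓ¹`, where a (sub)stochastic matrix acts as a contraction. The
visitation distribution solves the flow equation `d = (1 - η) μ + η d M`, so subtracting the two
flow equations gives `d - d' = η ((d - d') M + d' (M - M'))`. Taking norms and absorbing
`η ‖d - d'‖` on the left yields `(1 - η) ‖d - d'‖ ≤ η ‖M - M'‖ ‖d'‖`.
-/

theorem norm_smul_lt_one {E : Type*} [SeminormedAddCommGroup E] [NormedSpace ℝ E] {η : ℝ}
    (hη : 0 ≤ η) (hη1 : η < 1) {x : E} (hx : ‖x‖ ≤ 1) : ‖η • x‖ < 1 := by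
  rw [norm_smul_of_nonneg hη]
  exact (mul_le_of_le_one_right hη hx).trans_lt hη1

section DiscountedSum

variable {E : Type*} [NormedAddCommGroup E] [NormedSpace ℝ E]

/-- The normalized discounted sum `(1 - η) ∑ₜ ηᵗ Aᵗ x` of the orbit of `x` under `A`. It is the
visitation distribution when `A` is the transition operator and `x` the initial distribution. -/
noncomputable def discountedSum (η : ℝ) (A : E →L[ℝ] E) (x : E) : E :=
  (1 - η) • ∑' t : ℕ, η ^ t • (A ^ t) x

variable [CompleteSpace E] {A B : E →L[ℝ] E} {η : ℝ}

theorem summable_pow_smul_pow_apply (hA : ‖η • A‖ < 1) (x : E) :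
    Summable fun t : ℕ => η ^ t • (A ^ t) x := by
  simpa only [smul_pow, ContinuousLinearMap.apply_apply, smul_apply] using
    (summable_geometric_of_norm_lt_one hA).mapL (ContinuousLinearMap.apply ℝ E x)

theorem discountedSum_eq_add (hA : ‖η • A‖ < 1) (x : E) :
    discountedSum η A x = (1 - η) • x + η • A (discountedSum η A x) := by
  have hsum := summable_pow_smul_pow_apply hA x
  have hshift : ∑' t : ℕ, η ^ (t + 1) • (A ^ (t + 1)) x = η • A (∑' t : ℕ, η ^ t • (A ^ t) x) := by
    rw [A.map_tsum hsum, ← (hsum.mapL A).tsum_const_smul]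
    simp only [pow_succ', mul_smul, mul_apply_eq_comp, map_smul]
  rw [discountedSum, map_smul, smul_comm η, ← smul_add, ← hshift, hsum.tsum_eq_zero_add]
  simp only [pow_zero, one_smul, one_apply_eq_self]

theorem norm_discountedSum_le (hη : 0 ≤ η) (hη1 : η < 1) (hA : ‖A‖ ≤ 1) (x : E) :
    ‖discountedSum η A x‖ ≤ ‖x‖ := by
  set d := discountedSum η A x
  have hflow : ‖d‖ ≤ (1 - η) * ‖x‖ + η * ‖d‖ :=
    calc ‖d‖
      _ = ‖(1 - η) • x + η • A d‖ :=
        congrArg _ (discountedSum_eq_add (norm_smul_lt_one hη hη1 hA) x)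
      _ ≤ (1 - η) * ‖x‖ + η * ‖A d‖ := by
        refine (norm_add_le _ _).trans_eq ?_
        rw [norm_smul_of_nonneg (sub_nonneg.2 hη1.le), norm_smul_of_nonneg hη]
      _ ≤ (1 - η) * ‖x‖ + η * ‖d‖ := by
        gcongr
        exact A.le_of_opNorm_le_of_le hA le_rfl |>.trans_eq (one_mul _)
  exact le_of_mul_le_mul_left (by linarith) (sub_pos.2 hη1)

theorem discountedSum_sub_discountedSum (hA : ‖η • A‖ < 1) (hB : ‖η • B‖ < 1) (x : E) :
    discountedSum η A x - discountedSum η B x =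
      η • (A (discountedSum η A x - discountedSum η B x) + (A - B) (discountedSum η B x)) := by
  have hflowA := discountedSum_eq_add hA x
  have hflowB := discountedSum_eq_add hB x
  calc discountedSum η A x - discountedSum η B x
      = ((1 - η) • x + η • A (discountedSum η A x)) -
          ((1 - η) • x + η • B (discountedSum η B x)) := by rw [← hflowA, ← hflowB]
    _ = _ := by
      rw [map_sub, sub_apply, sub_add_sub_cancel, add_sub_add_left_eq_sub, smul_sub]

theorem norm_discountedSum_sub_le (hη : 0 ≤ η) (hη1 : η < 1) (hA : ‖A‖ ≤ 1) (hB : ‖B‖ ≤ 1)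
    (x : E) :
    ‖discountedSum η A x - discountedSum η B x‖ ≤ η * ‖A - B‖ / (1 - η) * ‖x‖ := by
  set e := discountedSum η A x - discountedSum η B x with e_def
  have hflow : ‖e‖ ≤ η * (‖e‖ + ‖A - B‖ * ‖x‖) :=
    calc ‖e‖
      _ = η * ‖A e + (A - B) (discountedSum η B x)‖ := by
        rw [← norm_smul_of_nonneg hη, e_def, ← discountedSum_sub_discountedSum
          (norm_smul_lt_one hη hη1 hA) (norm_smul_lt_one hη hη1 hB)]
      _ ≤ η * (‖e‖ + ‖A - B‖ * ‖x‖) := by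
        gcongr
        refine norm_add_le_of_le ?_ ?_
        · exact A.le_of_opNorm_le_of_le hA le_rfl |>.trans_eq (one_mul _)
        · exact (A - B).le_opNorm_of_le (norm_discountedSum_le hη hη1 hB x)
  rw [div_mul_eq_mul_div, le_div_iff₀ (sub_pos.2 hη1)]
  linarith

end DiscountedSum

section VecMulL1

open WithLp (toLp)
open Matrix

variable {m n S : Type*} [Fintype m] [Fintype n] [Fintype S] [DecidableEq S]

theorem sum_abs_vecMul_le {A : Matrix m n ℝ} {c : ℝ} (hA : ∀ i, ∑ j, |A i j| ≤ c) (v : m → ℝ) :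
    ∑ j, |(v ᵥ* A) j| ≤ c * ∑ i, |v i| :=
  calc ∑ j, |(v ᵥ* A) j|
      ≤ ∑ j, ∑ i, |v i * A i j| := Finset.sum_le_sum fun _ _ => Finset.abs_sum_le_sum_abs _ _
    _ = ∑ i, (∑ j, |A i j|) * |v i| := by
      rw [Finset.sum_comm]
      simp only [abs_mul, Finset.sum_mul, mul_comm |v _|]
    _ ≤ ∑ i, c * |v i| := by gcongr with i; exact hA i
    _ = c * ∑ i, |v i| := (Finset.mul_sum ..).symm

variable [DecidableEq m]

/-- The operator `v ↦ v A` on row vectors with the `ℓ¹` norm. As `Matrix.toLpLin` acts on column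
vectors, it is applied to the transpose. -/
noncomputable def vecMulL1 (A : Matrix m n ℝ) :
    PiLp 1 (fun _ : m => ℝ) →L[ℝ] PiLp 1 (fun _ : n => ℝ) :=
  (toLpLin 1 1 Aᵀ).toContinuousLinearMap

theorem vecMulL1_toLp (A : Matrix m n ℝ) (v : m → ℝ) : vecMulL1 A (toLp 1 v) = toLp 1 (v ᵥ* A) := by
  simp [vecMulL1, mulVec_transpose]

theorem vecMulL1_sub (A B : Matrix m n ℝ) : vecMulL1 (A - B) = vecMulL1 A - vecMulL1 B := by
  simp only [vecMulL1, transpose_sub, map_sub]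

theorem vecMulL1_pow_toLp (A : Matrix S S ℝ) (v : S → ℝ) (t : ℕ) :
    (vecMulL1 A ^ t) (toLp 1 v) = toLp 1 (v ᵥ* A ^ t) := by
  induction t with
  | zero => simp
  | succ t ih =>
    rw [pow_succ', mul_apply_eq_comp, ih, vecMulL1_toLp, vecMul_vecMul, pow_succ]

theorem norm_vecMulL1_le {A : Matrix m n ℝ} {c : ℝ} (hc : 0 ≤ c) (hA : ∀ i, ∑ j, |A i j| ≤ c) :
    ‖vecMulL1 A‖ ≤ c := by
  refine (vecMulL1 A).opNorm_le_bound hc fun v => ?_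
  rw [← WithLp.toLp_ofLp 1 v, vecMulL1_toLp]
  simpa only [PiLp.norm_eq_of_L1, Real.norm_eq_abs] using sum_abs_vecMul_le hA v.ofLp

theorem discountedSum_vecMulL1_apply {M : Matrix S S ℝ} {η : ℝ} (hM : ‖η • vecMulL1 M‖ < 1)
    (μ : S → ℝ) (s : S) :
    discountedSum η (vecMulL1 M) (toLp 1 μ) s = (1 - η) * ∑' t : ℕ, η ^ t * (μ ᵥ* M ^ t) s := by
  have hproj := (PiLp.proj 1 (𝕜 := ℝ) (fun _ : S => ℝ) s).map_tsum
    (summable_pow_smul_pow_apply hM (toLp 1 μ))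
  simp only [PiLp.proj_apply, vecMulL1_pow_toLp, PiLp.smul_apply, smul_eq_mul] at hproj
  simp only [discountedSum, vecMulL1_pow_toLp, PiLp.smul_apply, smul_eq_mul, hproj]

end VecMulL1

theorem TV_eq_half_norm_sub {α : Type*} [Fintype α] (x y : PiLp 1 (fun _ : α => ℝ)) :
    TV x y = 1 / 2 * ‖x - y‖ := by
  simp only [TV, PiLp.norm_eq_of_L1, PiLp.sub_apply, Real.norm_eq_abs]

theorem norm_vecMulL1_sub_le {m n : Type*} [Fintype m] [DecidableEq m] [Fintype n]
    {A B : Matrix m n ℝ} {δ : ℝ} (hδ : 0 ≤ δ) (hrow : ∀ i, TV (A i) (B i) ≤ δ) :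
    ‖vecMulL1 A - vecMulL1 B‖ ≤ 2 * δ := by
  rw [← vecMulL1_sub]
  refine norm_vecMulL1_le (by positivity) fun i => ?_
  have hi := hrow i
  simp only [TV] at hi
  simp only [Matrix.sub_apply]
  linarith

theorem visitation_distribution_shift_bound_general {S : Type*} [Fintype S] [DecidableEq S]
    {M M' : Matrix S S ℝ} (hM : ∀ s, ∑ s', |M s s'| ≤ 1) (hM' : ∀ s, ∑ s', |M' s s'| ≤ 1)
    {δ : ℝ} (hδ : 0 ≤ δ) (hrow : ∀ s, TV (M s) (M' s) ≤ δ) (μ : S → ℝ)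
    {η : ℝ} (hη : 0 ≤ η) (hη1 : η < 1) {d d' : S → ℝ}
    (hd : ∀ s, d s = (1 - η) * ∑' t : ℕ, η ^ t * (Matrix.vecMul μ (M ^ t)) s)
    (hd' : ∀ s, d' s = (1 - η) * ∑' t : ℕ, η ^ t * (Matrix.vecMul μ (M' ^ t)) s) :
    TV d d' ≤ η * δ / (1 - η) * ∑ s, |μ s| := by
  have hM_norm : ‖vecMulL1 M‖ ≤ 1 := norm_vecMulL1_le zero_le_one hM
  have hM'_norm : ‖vecMulL1 M'‖ ≤ 1 := norm_vecMulL1_le zero_le_one hM'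
  have hd_eq : d = discountedSum η (vecMulL1 M) (WithLp.toLp 1 μ) :=
    funext fun s => (hd s).trans
      (discountedSum_vecMulL1_apply (norm_smul_lt_one hη hη1 hM_norm) μ s).symm
  have hd'_eq : d' = discountedSum η (vecMulL1 M') (WithLp.toLp 1 μ) :=
    funext fun s => (hd' s).trans
      (discountedSum_vecMulL1_apply (norm_smul_lt_one hη hη1 hM'_norm) μ s).symm
  calc TV d d'
      ≤ 1 / 2 * (η * ‖vecMulL1 M - vecMulL1 M'‖ / (1 - η) * ‖WithLp.toLp 1 μ‖) := by
        rw [hd_eq, hd'_eq, TV_eq_half_norm_sub]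
        gcongr
        exact norm_discountedSum_sub_le hη hη1 hM_norm hM'_norm _
    _ ≤ 1 / 2 * (η * (2 * δ) / (1 - η) * ‖WithLp.toLp 1 μ‖) := by
        gcongr
        exact norm_vecMulL1_sub_le hδ hrow
    _ = η * δ / (1 - η) * ∑ s, |μ s| := by
        simp only [PiLp.norm_eq_of_L1, Real.norm_eq_abs]
        ring

/-- Visitation distribution shift bound. -/
theorem visitation_distribution_shift_bound
    {S : Type*} [Fintype S] [DecidableEq S] [Nonempty S]
    (M M' : Matrix S S ℝ)
    (hM0 : ∀ s s', 0 ≤ M s s') (hM1 : ∀ s, ∑ s', M s s' = 1)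
    (hM'0 : ∀ s s', 0 ≤ M' s s') (hM'1 : ∀ s, ∑ s', M' s s' = 1)
    (δ : ℝ) (hδ : 0 ≤ δ)
    (hrow : ∀ s, TV (fun s' => M s s') (fun s' => M' s s') ≤ δ)
    (μ : S → ℝ) (hμ0 : ∀ s, 0 ≤ μ s) (hμ1 : ∑ s, μ s = 1)
    (η : ℝ) (hη0 : 0 < η) (hη1 : η < 1)
    (d d' : S → ℝ)
    (hd : ∀ s, d s = (1 - η) * ∑' t : ℕ, η ^ t * (Matrix.vecMul μ (M ^ t)) s)
    (hd' : ∀ s, d' s = (1 - η) * ∑' t : ℕ, η ^ t * (Matrix.vecMul μ (M' ^ t)) s) :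
    TV d d' ≤ η * δ / (1 - η) := by
  simpa only [abs_of_nonneg (hμ0 _), hμ1, mul_one] using
    visitation_distribution_shift_bound_general
      (fun s => by simp only [abs_of_nonneg (hM0 s _), hM1, le_refl])
      (fun s => by simp only [abs_of_nonneg (hM'0 s _), hM'1, le_refl]) hδ hrow μ hη0.le hη1 hd hd'
end
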